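/- With A and v as defined in the context, the unital ℂ-subalgebra of M_n(ℂ) generated by A ∪ {v} is all of M_n(ℂ). -/

import Mathlib

open Matrix

noncomputable section

/-- The index set `{1, …, n}` partitioned into consecutive blocks
`I_1, …, I_j` of sizes `a 0, …, a (j−1)`. -/
abbrev BIdx (j : ℕ) (a : Fin j → ℕ) : Type := Σ i : Fin j, Fin (a i)

/-- The set of block-diagonal matrices, `A ≅ ⊕_{i=1}^j M_{a_i}(ℂ)`. -/
def blockDiagSet (j : ℕ) (a : Fin j → ℕ) : Set (Matrix (BIdx j a) (BIdx j a) ℂ) :=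
  {x | ∀ t t' : BIdx j a, t.1 ≠ t'.1 → x t t' = 0}

/-- `c_i`, the last index of block `I_i`. -/
def lastIdx (j : ℕ) (a : Fin j → ℕ) (ha : ∀ i, 0 < a i) (i : Fin j) : BIdx j a :=
  ⟨i, ⟨a i - 1, Nat.sub_lt (ha i) Nat.one_pos⟩⟩

/-- The cyclic successor on block labels. -/
def nextIdx (j : ℕ) (hj : 0 < j) (i : Fin j) : Fin j :=
  ⟨((i : ℕ) + 1) % j, Nat.mod_lt _ hj⟩

/-- The permutation `σ` with `σ(c_i) = c_{i+1}` (cyclically) and `σ(t) = t`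
for all other `t`. -/
def sigmaPerm (j : ℕ) (a : Fin j → ℕ) (hj : 0 < j) (ha : ∀ i, 0 < a i)
    (t : BIdx j a) : BIdx j a :=
  if t = lastIdx j a ha t.1 then lastIdx j a ha (nextIdx j hj t.1) else t

/-- The permutation matrix `v` of `σ`: `v_{σ(t), t} = 1`. -/
def vMat (j : ℕ) (a : Fin j → ℕ) (hj : 0 < j) (ha : ∀ i, 0 < a i) :
    Matrix (BIdx j a) (BIdx j a) ℂ :=
  Matrix.of fun t' t : BIdx j a => if t' = sigmaPerm j a hj ha t then (1 : ℂ) else 0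

/-- The diagonal projection `s` onto the positions `c_1, …, c_j`. -/
def sMat (j : ℕ) (a : Fin j → ℕ) (ha : ∀ i, 0 < a i) :
    Matrix (BIdx j a) (BIdx j a) ℂ :=
  Matrix.diagonal fun t : BIdx j a => if t = lastIdx j a ha t.1 then (1 : ℂ) else 0

/-- `r = s v s`. -/
def rMat (j : ℕ) (a : Fin j → ℕ) (hj : 0 < j) (ha : ∀ i, 0 < a i) :
    Matrix (BIdx j a) (BIdx j a) ℂ :=
  sMat j a ha * vMat j a hj ha * sMat j a ha

/-- The central unitary `w = Σ_i γ^{i−1} 1_i`. -/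
def wMat (j : ℕ) (a : Fin j → ℕ) (γ : ℂ) : Matrix (BIdx j a) (BIdx j a) ℂ :=
  Matrix.diagonal fun t : BIdx j a => γ ^ (t.1 : ℕ)

/-- The diagonal projection `1_i` onto block `I_i`. -/
def oneBlock (j : ℕ) (a : Fin j → ℕ) (i : Fin j) : Matrix (BIdx j a) (BIdx j a) ℂ :=
  Matrix.diagonal fun t : BIdx j a => if t.1 = i then (1 : ℂ) else 0

/-- `p_i`: supported on block `I_i`, there equal to
`diag(1, γ_i, …, γ_i^{a_i−1})` with `γ_i = exp(2π i / a_i)`, and `0` outside. -/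
def pBlock (j : ℕ) (a : Fin j → ℕ) (i : Fin j) : Matrix (BIdx j a) (BIdx j a) ℂ :=
  Matrix.diagonal fun t : BIdx j a =>
    if t.1 = i then Complex.exp (2 * Real.pi * Complex.I / (a i : ℂ)) ^ (t.2 : ℕ) else 0

/-- `q_i`: supported on block `I_i`, there equal to the cyclic permutation
matrix (mod `a_i`), and `0` outside. -/
def qBlock (j : ℕ) (a : Fin j → ℕ) (i : Fin j) : Matrix (BIdx j a) (BIdx j a) ℂ :=
  Matrix.of fun t' t : BIdx j a =>
    if t'.1 = i ∧ t.1 = i ∧ (t'.2 : ℕ) = ((t.2 : ℕ) + 1) % a i then (1 : ℂ) else 0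

/-!
The matrix units `single s t 1` with `s` and `t` in the same block are block diagonal. If the entry
`v s t` is a unit, then `single s s 1 * v * single t t 1` is a unit multiple of `single s t 1`, so a
unit entry of `v` in row block `i'` and column block `i` gives all matrix units from block `i` to
block `i'`. Products of matrix units follow the paths of the graph of such pairs of blocks;
as soon as that graph is strongly connected, every matrix unit is generated. For the permutation
matrix of `σ`, the graph contains the cycle through all the blocks.
-/

lemma submodule_eq_top_of_forall_single_mem {R m n : Type*} [Semiring R] [Finite m] [Finite n]
    [DecidableEq m] [DecidableEq n] {S : Submodule R (Matrix m n R)}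
    (h : ∀ i j, single i j 1 ∈ S) : S = ⊤ := by
  refine S.eq_top_iff'.2 fun x => ?_
  induction x using Matrix.induction_on' with
  | h_zero => exact S.zero_mem
  | h_add _ _ hp hq => exact S.add_mem hp hq
  | h_std_basis i j c => simpa [smul_single] using S.smul_mem c (h i j)

section MatrixUnits

variable {R n : Type*} [CommSemiring R] [Fintype n] [DecidableEq n]
  {S : Subalgebra R (Matrix n n R)}

lemma single_one_mem_trans {s t u : n} (hst : single s t 1 ∈ S) (htu : single t u 1 ∈ S) :
    single s u 1 ∈ S := by
  simpa using S.mul_mem hst htu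

lemma single_one_mem_of_isUnit_apply {v : Matrix n n R} {s t : n} (hs : single s s 1 ∈ S)
    (hv : v ∈ S) (ht : single t t 1 ∈ S) (hvst : IsUnit (v s t)) : single s t 1 ∈ S := by
  obtain ⟨c, hc⟩ := hvst.exists_left_inv
  have hcut : single s t (v s t) ∈ S := by
    simpa using S.mul_mem (S.mul_mem hs hv) ht
  simpa [smul_single, hc] using S.smul_mem hcut c

end MatrixUnits

section Blocks

variable {n ι : Type*}

/-- The matrices that are block diagonal for the partition of the index set into the fibres of
`b`. The label type carries no order, unlike in `Matrix.BlockTriangular`. -/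
def blockDiagonalMatrices (R : Type*) [Zero R] (b : n → ι) : Set (Matrix n n R) :=
  {x | ∀ s t, b s ≠ b t → x s t = 0}

variable {R : Type*}

/-- The directed graph on block labels in which `i` points to `i'` when `v` has an invertible entry
in a column of block `i` and a row of block `i'`, so that edges have the direction in which `v`
moves column vectors. -/
def BlockEdge [Monoid R] (b : n → ι) (v : Matrix n n R) (i i' : ι) : Prop :=
  ∃ s t, b s = i' ∧ b t = i ∧ IsUnit (v s t)

lemma single_mem_blockDiagonalMatrices [Zero R] [DecidableEq n] {b : n → ι} {s t : n}
    (h : b s = b t) (c : R) : single s t c ∈ blockDiagonalMatrices R b := by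
  intro s' t' hne
  refine single_apply_of_ne _ _ _ _ _ ?_
  rintro ⟨rfl, rfl⟩
  exact hne h

variable [CommSemiring R] [Fintype n] [DecidableEq n] {b : n → ι} {v : Matrix n n R}
  {S : Subalgebra R (Matrix n n R)}

lemma single_one_mem_of_blockEdge (hS : blockDiagonalMatrices R b ⊆ S) (hv : v ∈ S) {s t : n}
    (h : BlockEdge b v (b t) (b s)) : single s t 1 ∈ S := by
  obtain ⟨s', t', hs', ht', hunit⟩ := h
  have hblock {p q : n} (hpq : b p = b q) : single p q 1 ∈ S :=
    hS (single_mem_blockDiagonalMatrices hpq 1)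
  have hentry : single s' t' 1 ∈ S :=
    single_one_mem_of_isUnit_apply (hblock rfl) hv (hblock rfl) hunit
  exact single_one_mem_trans (hblock hs'.symm) (single_one_mem_trans hentry (hblock ht'))

lemma single_one_mem_of_reflTransGen_blockEdge (hS : blockDiagonalMatrices R b ⊆ S) (hv : v ∈ S)
    {s t : n} (h : Relation.ReflTransGen (BlockEdge b v) (b t) (b s)) : single s t 1 ∈ S := by
  generalize hi : b s = i at h
  induction h generalizing s with
  | refl => exact hS (single_mem_blockDiagonalMatrices hi 1)
  | tail _ hedge ih =>
    have ⟨_, u, _, hu, _⟩ := hedge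
    subst hi hu
    exact single_one_mem_trans (single_one_mem_of_blockEdge hS hv hedge) (ih rfl)

theorem statement7_general (hconn : ∀ s t, Relation.ReflTransGen (BlockEdge b v) (b s) (b t)) :
    Algebra.adjoin R (blockDiagonalMatrices R b ∪ {v}) = ⊤ := by
  obtain ⟨hS, hv⟩ := Set.union_subset_iff.1
    (Algebra.subset_adjoin (R := R) (s := blockDiagonalMatrices R b ∪ {v}))
  exact Algebra.toSubmodule_eq_top.1 <| submodule_eq_top_of_forall_single_mem fun _ _ =>
    single_one_mem_of_reflTransGen_blockEdge hS (Set.singleton_subset_iff.1 hv) (hconn _ _)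

end Blocks

lemma reflTransGen_iterate {α : Type*} {r : α → α → Prop} {f : α → α} (h : ∀ x, r x (f x))
    (k : ℕ) (x : α) : Relation.ReflTransGen r x (f^[k] x) := by
  induction k with
  | zero => rfl
  | succ k ih =>
    rw [Function.iterate_succ_apply']
    exact ih.tail (h _)

section Cycle

variable {j : ℕ} (hj : 0 < j)

lemma val_iterate_nextIdx (k : ℕ) (i : Fin j) : ((nextIdx j hj)^[k] i : ℕ) = (i + k) % j := by
  induction k with
  | zero => simp [Nat.mod_eq_of_lt i.2]
  | succ k ih =>
    rw [Function.iterate_succ_apply']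
    simp [nextIdx, ih, Nat.add_assoc]

lemma exists_iterate_nextIdx_eq (i i' : Fin j) : ∃ k, (nextIdx j hj)^[k] i = i' := by
  refine ⟨(j - i) + i', Fin.ext ?_⟩
  rw [val_iterate_nextIdx, ← Nat.add_assoc, Nat.add_sub_cancel' i.2.le, Nat.add_mod_left,
    Nat.mod_eq_of_lt i'.2]

variable {a : Fin j → ℕ} (ha : ∀ i, 0 < a i)

lemma sigmaPerm_lastIdx (i : Fin j) :
    sigmaPerm j a hj ha (lastIdx j a ha i) = lastIdx j a ha (nextIdx j hj i) :=
  if_pos rfl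

lemma blockEdge_vMat_nextIdx (i : Fin j) :
    BlockEdge Sigma.fst (vMat j a hj ha) i (nextIdx j hj i) :=
  ⟨lastIdx j a ha (nextIdx j hj i), lastIdx j a ha i, rfl, rfl, by
    simp [vMat, sigmaPerm_lastIdx]⟩

lemma reflTransGen_blockEdge_vMat (i i' : Fin j) :
    Relation.ReflTransGen (BlockEdge Sigma.fst (vMat j a hj ha)) i i' := by
  obtain ⟨k, rfl⟩ := exists_iterate_nextIdx_eq hj i i'
  exact reflTransGen_iterate (blockEdge_vMat_nextIdx hj ha) k i

end Cycle

/-- `A` and `v` generate `M_n(ℂ)` as a unital ℂ-algebra. -/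
theorem statement7 (j : ℕ) (hj : 0 < j) (a : Fin j → ℕ) (ha : ∀ i, 0 < a i) :
    Algebra.adjoin ℂ (blockDiagSet j a ∪ {vMat j a hj ha}) =
      (⊤ : Subalgebra ℂ (Matrix (BIdx j a) (BIdx j a) ℂ)) :=
  statement7_general fun _ _ => reflTransGen_blockEdge_vMat hj ha _ _
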